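/- Let b ∈ ℝ^n have all entries nonzero. Then the smallest eigenvalue λ of W(b) is positive, its eigenspace is one-dimensional, and every eigenvector x of W(b) for λ has all entries nonzero and satisfies: either (−1)^i sgn(x_i) = sgn(b_i) for all i, or (−1)^i sgn(x_i) = −sgn(b_i) for all i. -/

import Mathlib

open Matrix BigOperators

/-- The Cauchy matrix with entries `1/(λᵢ + λⱼ)`. -/
noncomputable def cauchyPsi (n : ℕ) (lam : Fin n → ℝ) : Matrix (Fin n) (Fin n) ℝ :=
  Matrix.of fun i j => 1 / (lam i + lam j)

/-- `W(b) = diag(b) Ψ diag(b)`. -/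
noncomputable def cauchyW (n : ℕ) (lam : Fin n → ℝ) (b : Fin n → ℝ) :
    Matrix (Fin n) (Fin n) ℝ :=
  Matrix.diagonal b * cauchyPsi n lam * Matrix.diagonal b

/-!
Lagrange interpolation at the nodes `-yⱼ` inverts the Cauchy matrix `C = (1 / (xᵢ + yⱼ))`:
`C⁻¹ = D Cᵀ E` with explicit diagonal `D` and `E`. For `x = y = λ` increasing, `D = E` has
alternating signs, so up to the signature `s = ((-1)ⁱ sgn bᵢ)` the matrix `W(b)⁻¹` has positive
entries. Its top eigenvectors are the bottom eigenvectors of `W(b)`, and Perron's argument for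
symmetric matrices shows that, after multiplication by `s`, they have entries of a single strict
sign. An eigenspace whose nonzero vectors all have nonzero entries is a line. Positive definiteness
comes from `1 / (λᵢ + λⱼ) = ∫₀^∞ exp (-λᵢ t) exp (-λⱼ t) dt` and the invertibility of `C`.
-/

/-- The Cauchy matrix of two families, in the additive convention `(xᵢ + yⱼ)⁻¹`, so that
`cauchyPsi` is the case `x = y`. -/
def cauchyMatrix {ι K : Type*} [Field K] (x y : ι → K) : Matrix ι ι K :=
  of fun i j => (x i + y j)⁻¹

section CauchyInverse

variable {ι K : Type*} [DecidableEq ι] [Field K]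

theorem nodalWeight_neg (s : Finset ι) (v : ι → K) (i : ι) :
    Lagrange.nodalWeight s (-v) i = (-1) ^ (s.erase i).card * Lagrange.nodalWeight s v i := by
  have hneg (j : ι) : ((-v) i - (-v) j)⁻¹ = -1 * (v i - v j)⁻¹ := by
    rw [Pi.neg_apply, Pi.neg_apply, neg_sub_neg, ← neg_sub, inv_neg, neg_one_mul]
  simp only [Lagrange.nodalWeight, hneg, Finset.prod_mul_distrib, Finset.prod_const]

variable [Fintype ι]

/-- The diagonal scaling `∏ᵢ (xⱼ + yᵢ) / ∏_{i ≠ j} (xⱼ - xᵢ)` which turns a Cauchy matrix into the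
inverse of the transposed one. -/
def cauchyWeight (x y : ι → K) (j : ι) : K :=
  (∏ i, (x j + y i)) * Lagrange.nodalWeight Finset.univ x j

theorem nodalWeight_neg_mul_eval_nodal_erase {x y : ι → K} (j k : ι) (hxy : y j + x k ≠ 0) :
    Lagrange.nodalWeight Finset.univ (-y) j *
        (Lagrange.nodal (Finset.univ.erase k) x).eval (-y j) =
      cauchyWeight y x j * (y j + x k)⁻¹ := by
  have heval : (Lagrange.nodal (Finset.univ.erase k) x).eval (-y j) =
      (-1) ^ (Finset.univ.erase k).card * ∏ i ∈ Finset.univ.erase k, (y j + x i) := by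
    rw [Lagrange.eval_nodal, ← Finset.prod_neg]
    exact Finset.prod_congr rfl fun i _ => by ring
  have hcard : (Finset.univ.erase j).card = (Finset.univ.erase k).card := by simp
  have hsq : ((-1 : K) ^ (Finset.univ.erase k).card) * (-1) ^ (Finset.univ.erase k).card = 1 := by
    rw [← mul_pow, neg_one_mul, neg_neg, one_pow]
  rw [nodalWeight_neg, heval, cauchyWeight, hcard,
    ← Finset.mul_prod_erase _ _ (Finset.mem_univ k), mul_mul_mul_comm, hsq]
  field_simp

-- Lagrange interpolation at the nodes `-yⱼ` of `∏_{m ≠ k} (X - xₘ)`, evaluated off the nodes.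
theorem eval_nodal_erase_eq_prod_mul_sum {x y : ι → K} (hy : Function.Injective y) {k : ι}
    (hk : ∀ j, x k + y j ≠ 0) {a : K} (ha : ∀ j, a + y j ≠ 0) :
    (Lagrange.nodal (Finset.univ.erase k) x).eval a =
      (∏ j, (a + y j)) * ∑ j, (a + y j)⁻¹ * (cauchyWeight y x j * (y j + x k)⁻¹) := by
  have hdeg : (Lagrange.nodal (Finset.univ.erase k) x).degree < (Finset.univ : Finset ι).card := by
    rw [Lagrange.degree_nodal, Nat.cast_lt]
    exact Finset.card_erase_lt_of_mem (Finset.mem_univ k)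
  have hnode (j : ι) : a ≠ (-y) j := fun h => ha j (by rw [h, Pi.neg_apply, neg_add_cancel])
  rw [Lagrange.eq_interpolate (neg_injective.comp hy).injOn hdeg]
  refine (Lagrange.eval_interpolate_not_at_node _ fun j _ => hnode j).trans ?_
  congr 1
  · simp only [Lagrange.eval_nodal, Pi.neg_apply, sub_neg_eq_add]
  · refine Finset.sum_congr rfl fun j _ => ?_
    rw [← nodalWeight_neg_mul_eval_nodal_erase j k (by rw [add_comm]; exact hk j)]
    simp only [Pi.neg_apply, sub_neg_eq_add, Function.comp_apply]
    ring

theorem sum_inv_mul_cauchyWeight_mul_inv {x y : ι → K} (hx : Function.Injective x)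
    (hy : Function.Injective y) (hxy : ∀ i j, x i + y j ≠ 0) (i k : ι) :
    (∑ j, (x i + y j)⁻¹ * (cauchyWeight y x j * (y j + x k)⁻¹)) * cauchyWeight x y k =
      (1 : Matrix ι ι K) i k := by
  have hinterp := eval_nodal_erase_eq_prod_mul_sum hy (hxy k) (hxy i)
  rcases eq_or_ne i k with rfl | hik
  · have hP : (Lagrange.nodal (Finset.univ.erase i) x).eval (x i) ≠ 0 :=
      Lagrange.eval_nodal_not_at_node fun m hm h => Finset.ne_of_mem_erase hm (hx h).symm
    rw [one_apply_eq, cauchyWeight, Lagrange.nodalWeight_eq_eval_nodal_erase_inv, ← mul_assoc,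
      mul_comm _ (∏ j, _), ← hinterp, mul_inv_cancel₀ hP]
  · have hprod : ∏ j, (x i + y j) ≠ 0 := Finset.prod_ne_zero_iff.2 fun j _ => hxy i j
    have hP : (Lagrange.nodal (Finset.univ.erase k) x).eval (x i) = 0 :=
      Lagrange.eval_nodal_at_node (Finset.mem_erase.2 ⟨hik, Finset.mem_univ i⟩)
    rw [one_apply_ne hik, (mul_eq_zero.1 (hinterp.symm.trans hP)).resolve_left hprod, zero_mul]

theorem cauchyMatrix_mul_eq_one {x y : ι → K} (hx : Function.Injective x)
    (hy : Function.Injective y) (hxy : ∀ i j, x i + y j ≠ 0) :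
    cauchyMatrix x y *
      (diagonal (cauchyWeight y x) * cauchyMatrix y x * diagonal (cauchyWeight x y)) = 1 := by
  ext i k
  rw [← sum_inv_mul_cauchyWeight_mul_inv hx hy hxy, ← mul_assoc, mul_diagonal, mul_apply]
  simp only [cauchyMatrix, diagonal_mul, of_apply]

end CauchyInverse

section CauchyReal

variable {ι : Type*}

theorem dotProduct_cauchyMatrix_mulVec_eq_integral [Fintype ι] {x : ι → ℝ} (hx : ∀ i, 0 < x i)
    (v : ι → ℝ) :
    v ⬝ᵥ (cauchyMatrix x x *ᵥ v) =
      ∫ t in Set.Ioi (0 : ℝ), (∑ i, v i * Real.exp (-x i * t)) ^ 2 := by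
  have hsq (t : ℝ) : (∑ i, v i * Real.exp (-x i * t)) ^ 2 =
      ∑ i, ∑ j, v i * v j * Real.exp (-(x i + x j) * t) := by
    rw [sq, Finset.sum_mul_sum]
    refine Finset.sum_congr rfl fun i _ => Finset.sum_congr rfl fun j _ => ?_
    rw [mul_mul_mul_comm, ← Real.exp_add, neg_add, add_mul]
  have hxx (i j : ι) : 0 < x i + x j := add_pos (hx i) (hx j)
  have hint (i j : ι) : MeasureTheory.IntegrableOn
      (fun t => v i * v j * Real.exp (-(x i + x j) * t)) (Set.Ioi 0) :=
    (integrableOn_exp_mul_Ioi (neg_neg_of_pos (hxx i j)) 0).const_mul _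
  have hval (i j : ι) : ∫ t in Set.Ioi (0 : ℝ), v i * v j * Real.exp (-(x i + x j) * t) =
      v i * ((x i + x j)⁻¹ * v j) := by
    rw [MeasureTheory.integral_const_mul, integral_exp_mul_Ioi (neg_neg_of_pos (hxx i j)),
      mul_zero, Real.exp_zero, neg_div_neg_eq, one_div]
    ring
  simp only [hsq]
  rw [MeasureTheory.integral_finsetSum _ fun i _ =>
    MeasureTheory.integrable_finsetSum _ fun j _ => hint i j]
  refine Finset.sum_congr rfl fun i _ => ?_
  rw [MeasureTheory.integral_finsetSum _ fun j _ => hint i j, mulVec, dotProduct, Finset.mul_sum]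
  exact Finset.sum_congr rfl fun j _ => (hval i j).symm

theorem posSemidef_cauchyMatrix [Finite ι] {x : ι → ℝ} (hx : ∀ i, 0 < x i) :
    (cauchyMatrix x x).PosSemidef := by
  have := Fintype.ofFinite ι
  refine .of_dotProduct_mulVec_nonneg ?_ fun v => ?_
  · ext i j
    simp only [cauchyMatrix, conjTranspose_apply, of_apply, star_trivial, add_comm]
  · rw [star_trivial, dotProduct_cauchyMatrix_mulVec_eq_integral hx]
    exact MeasureTheory.integral_nonneg fun t => sq_nonneg _

theorem posDef_cauchyMatrix [Finite ι] {x : ι → ℝ} (hx : ∀ i, 0 < x i)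
    (hinj : Function.Injective x) : (cauchyMatrix x x).PosDef := by
  classical
  have := Fintype.ofFinite ι
  exact (posSemidef_cauchyMatrix hx).posDef_iff_isUnit.2 <| IsUnit.of_mul_eq_one _ <|
    cauchyMatrix_mul_eq_one hinj hinj fun i j => (add_pos (hx i) (hx j)).ne'

end CauchyReal

section Signs

variable {K : Type*} [Field K] [LinearOrder K] [IsStrictOrderedRing K]

theorem neg_one_pow_card_lt_mul_nodalWeight_pos {ι : Type*} [LinearOrder ι] {s : Finset ι}
    {v : ι → K} {i : ι} (hv : StrictMonoOn v s) (hi : i ∈ s) :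
    0 < (-1) ^ (s.filter (i < ·)).card * Lagrange.nodalWeight s v i := by
  have hpow : (-1 : K) ^ (s.filter (i < ·)).card =
      ∏ j ∈ s.erase i, if i < j then -1 else 1 := by
    rw [Finset.prod_erase s (f := fun j => if i < j then (-1 : K) else 1) (if_neg (lt_irrefl i)),
      ← Finset.prod_filter, Finset.prod_const]
  rw [hpow, Lagrange.nodalWeight, ← Finset.prod_mul_distrib]
  refine Finset.prod_pos fun j hj => ?_
  obtain ⟨hji, hj⟩ := Finset.mem_erase.1 hj
  split_ifs with hij
  · rw [neg_one_mul, neg_pos, inv_lt_zero, sub_neg]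
    exact hv hi hj hij
  · rw [one_mul, inv_pos, sub_pos]
    exact hv hj hi (hji.lt_of_le (not_lt.1 hij))

theorem neg_one_pow_mul_cauchyWeight_pos {n : ℕ} {x y : Fin n → K} (hxy : ∀ i j, 0 < x i + y j)
    (hx : StrictMono x) (i : Fin n) :
    0 < (-1) ^ (n - 1) * ((-1) ^ (i : ℕ) * cauchyWeight x y i) := by
  have hnodal := neg_one_pow_card_lt_mul_nodalWeight_pos (s := Finset.univ)
    (hx.strictMonoOn _) (Finset.mem_univ i)
  have hpow : (-1 : K) ^ (n - 1) * (-1) ^ (i : ℕ) = (-1) ^ (n - 1 - i : ℕ) := by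
    rw [← pow_add, show n - 1 + (i : ℕ) = n - 1 - i + (i + i) by lia, pow_add,
      Even.neg_one_pow ⟨_, rfl⟩, mul_one]
  rw [Finset.filter_lt_eq_Ioi, Fin.card_Ioi, ← hpow] at hnodal
  rw [← mul_assoc, cauchyWeight, mul_left_comm]
  exact mul_pos (Finset.prod_pos fun k _ => hxy i k) hnodal

theorem neg_one_pow_mul_cauchyWeight_mul_pos {n : ℕ} {x y : Fin n → K}
    (hxy : ∀ i j, 0 < x i + y j) (hx : StrictMono x) (i j : Fin n) :
    0 < ((-1) ^ (i : ℕ) * cauchyWeight x y i) * ((-1) ^ (j : ℕ) * cauchyWeight x y j) := by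
  have h := mul_pos (neg_one_pow_mul_cauchyWeight_pos hxy hx i)
    (neg_one_pow_mul_cauchyWeight_pos hxy hx j)
  rwa [mul_mul_mul_comm, ← mul_pow, neg_one_mul, neg_neg, one_pow, one_mul] at h

end Signs

section Perron

variable {ι : Type*} [Fintype ι]

theorem pos_of_nonneg_of_mulVec_eq_smul {R : Type*} [Ring R] [LinearOrder R]
    [IsStrictOrderedRing R] {B : Matrix ι ι R} (hB : ∀ i j, 0 < B i j) {ν : R} {u : ι → R}
    (hu : 0 ≤ u) (hu0 : u ≠ 0) (hBu : B *ᵥ u = ν • u) (i : ι) : 0 < u i := by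
  obtain ⟨j, hj⟩ := Function.ne_iff.1 hu0
  have hpos : 0 < (B *ᵥ u) i :=
    Finset.sum_pos' (fun k _ => mul_nonneg (hB i k).le (hu k))
      ⟨j, Finset.mem_univ j, mul_pos (hB i j) ((hu j).lt_of_ne' hj)⟩
  rw [hBu, Pi.smul_apply, smul_eq_mul] at hpos
  exact (hu i).lt_of_ne' (right_ne_zero_of_mul hpos.ne')

theorem dotProduct_mulVec_le_abs {R : Type*} [CommRing R] [LinearOrder R]
    [IsStrictOrderedRing R] {B : Matrix ι ι R} (hB : ∀ i j, 0 ≤ B i j) (x : ι → R) :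
    x ⬝ᵥ (B *ᵥ x) ≤ |x| ⬝ᵥ (B *ᵥ |x|) := by
  simp only [dotProduct, mulVec, Finset.mul_sum, Pi.abs_apply]
  refine Finset.sum_le_sum fun i _ => Finset.sum_le_sum fun j _ => ?_
  rw [mul_left_comm, mul_left_comm |x i|, ← abs_mul]
  exact mul_le_mul_of_nonneg_left (le_abs_self _) (hB i j)

variable [DecidableEq ι]

theorem mulVec_abs_eq_smul_abs {B : Matrix ι ι ℝ} (hB : ∀ i j, 0 ≤ B i j) {ν : ℝ}
    (hν : (ν • 1 - B).PosSemidef) {x : ι → ℝ} (hBx : B *ᵥ x = ν • x) :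
    B *ᵥ |x| = ν • |x| := by
  have happly (v : ι → ℝ) : (ν • 1 - B) *ᵥ v = ν • v - B *ᵥ v := by
    rw [sub_mulVec, smul_mulVec, one_mulVec]
  have habs : |x| ⬝ᵥ |x| = x ⬝ᵥ x := Finset.sum_congr rfl fun i _ => abs_mul_abs_self (x i)
  have hle : |x| ⬝ᵥ ((ν • 1 - B) *ᵥ |x|) ≤ 0 := by
    rw [happly, dotProduct_sub, dotProduct_smul, habs, ← dotProduct_smul, ← hBx, sub_nonpos]
    exact dotProduct_mulVec_le_abs hB x
  have hzero := (hν.dotProduct_mulVec_zero_iff |x|).1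
    (le_antisymm hle (hν.dotProduct_mulVec_nonneg |x|))
  rw [happly] at hzero
  exact (sub_eq_zero.1 hzero).symm

theorem pos_or_neg_of_mulVec_eq_smul {B : Matrix ι ι ℝ} (hB : ∀ i j, 0 < B i j) {ν : ℝ}
    (hν : (ν • 1 - B).PosSemidef) {x : ι → ℝ} (hx : x ≠ 0) (hBx : B *ᵥ x = ν • x) :
    (∀ i, 0 < x i) ∨ ∀ i, x i < 0 := by
  have habs := mulVec_abs_eq_smul_abs (fun i j => (hB i j).le) hν hBx
  -- `|x| + x` lies in the eigenspace and is nonnegative, so it vanishes or is entrywise positive.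
  have hadd : B *ᵥ (|x| + x) = ν • (|x| + x) := by rw [mulVec_add, habs, hBx, smul_add]
  have hadd_nonneg : 0 ≤ |x| + x := fun i => neg_le_iff_add_nonneg.1 (neg_le_abs (x i))
  by_cases hzero : |x| + x = 0
  · have hpos := pos_of_nonneg_of_mulVec_eq_smul hB (abs_nonneg x)
      (fun h => hx <| funext fun i => abs_eq_zero.1 (congrFun h i)) habs
    exact .inr fun i => by
      rw [eq_neg_of_add_eq_zero_right hzero]
      exact neg_neg_of_pos (hpos i)
  · have hpos := pos_of_nonneg_of_mulVec_eq_smul hB hadd_nonneg hzero hadd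
    refine .inl fun i => lt_of_not_ge fun hi => (hpos i).ne' ?_
    rw [Pi.add_apply, Pi.abs_apply, abs_of_nonpos hi, neg_add_cancel]

theorem pos_or_neg_mul_of_mulVec_eq_smul {B : Matrix ι ι ℝ} {s : ι → ℝ} (hs : s * s = 1)
    (hB : ∀ i j, 0 < s i * B i j * s j) {ν : ℝ} (hν : (ν • 1 - B).PosSemidef) {x : ι → ℝ}
    (hx : x ≠ 0) (hBx : B *ᵥ x = ν • x) :
    (∀ i, 0 < s i * x i) ∨ ∀ i, s i * x i < 0 := by
  have hss (v : ι → ℝ) : s * (s * v) = v := by rw [← mul_assoc, hs, one_mul]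
  have hdiag (v : ι → ℝ) : diagonal s *ᵥ v = s * v := funext fun i => mulVec_diagonal s v i
  have hpos (i j : ι) : 0 < (diagonal s * B * diagonal s) i j := by
    rw [mul_diagonal, diagonal_mul]
    exact hB i j
  have hpsd : (ν • 1 - diagonal s * B * diagonal s).PosSemidef := by
    have hsq : diagonal s * diagonal s = 1 := by
      rw [diagonal_mul_diagonal', ← Pi.mul_def, hs]
      exact diagonal_one
    have hconj := hν.conjTranspose_mul_mul_same (diagonal s)
    rwa [diagonal_conjTranspose, star_trivial, mul_sub, sub_mul, mul_smul_comm, mul_one,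
      smul_mul_assoc, hsq] at hconj
  refine pos_or_neg_of_mulVec_eq_smul hpos hpsd (x := s * x) (fun h => hx ?_) ?_
  · rw [← hss x, h, mul_zero]
  · rw [← mulVec_mulVec, ← mulVec_mulVec, hdiag (s * x), hss, hBx, hdiag, mul_smul_comm]

end Perron

section Spectrum

variable {ι : Type*} [Fintype ι]

theorem exists_eq_smul_of_mulVec_eq_smul {K : Type*} [Field K] {A : Matrix ι ι K} {μ : K} {i : ι}
    (hA : ∀ v, v ≠ 0 → A *ᵥ v = μ • v → v i ≠ 0) {x w : ι → K} (hx : x ≠ 0)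
    (hAx : A *ᵥ x = μ • x) (hAw : A *ᵥ w = μ • w) : ∃ c : K, w = c • x := by
  refine ⟨w i / x i, sub_eq_zero.1 (by_contra fun hne => hA _ hne ?_ ?_)⟩
  · rw [mulVec_sub, mulVec_smul, hAw, hAx, smul_sub, smul_comm]
  · rw [Pi.sub_apply, Pi.smul_apply, smul_eq_mul, div_mul_cancel₀ _ (hA x hx hAx), sub_self]

variable [DecidableEq ι] {A : Matrix ι ι ℝ} {μ : ℝ}

theorem isLeast_sInf_spectrum [Nonempty ι] (hA : A.IsHermitian) :
    IsLeast (spectrum ℝ A) (sInf (spectrum ℝ A)) := by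
  refine finite_real_spectrum.isCompact.isLeast_sInf ?_
  rw [hA.spectrum_real_eq_range_eigenvalues]
  exact Set.range_nonempty _

theorem pos_of_mem_spectrum (hA : A.PosDef) (hμ : μ ∈ spectrum ℝ A) : 0 < μ := by
  rw [hA.isHermitian.spectrum_real_eq_range_eigenvalues] at hμ
  obtain ⟨i, rfl⟩ := hμ
  exact hA.eigenvalues_pos i

theorem exists_mulVec_eq_smul_of_mem_spectrum {K : Type*} [Field K] {A : Matrix ι ι K} {μ : K}
    (hμ : μ ∈ spectrum K A) : ∃ x : ι → K, x ≠ 0 ∧ A *ᵥ x = μ • x := by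
  rw [← spectrum_toLin', ← Module.End.hasEigenvalue_iff_mem_spectrum] at hμ
  obtain ⟨x, hx⟩ := hμ.exists_hasEigenvector
  exact ⟨x, hx.2, hx.apply_eq_smul⟩

theorem inv_mulVec_eq_inv_smul {K : Type*} [Field K] {A : Matrix ι ι K} {μ : K} (hA : IsUnit A)
    (hμ : μ ≠ 0) {x : ι → K} (hAx : A *ᵥ x = μ • x) : A⁻¹ *ᵥ x = μ⁻¹ • x := by
  rw [eq_inv_smul_iff₀ hμ, ← mulVec_smul, ← hAx, mulVec_mulVec,
    nonsing_inv_mul _ ((isUnit_iff_isUnit_det A).1 hA), one_mulVec]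

theorem posSemidef_inv_smul_one_sub_inv (hA : A.PosDef) (hμ : IsLeast (spectrum ℝ A) μ) :
    (μ⁻¹ • 1 - A⁻¹).PosSemidef := by
  refine posSemidef_iff_isHermitian_and_spectrum_nonneg.2
    ⟨(isHermitian_one.smul (.all μ⁻¹)).sub hA.isHermitian.inv, ?_⟩
  rw [← Algebra.algebraMap_eq_smul_one, ← spectrum.singleton_sub_eq, Set.singleton_sub]
  rintro _ ⟨t, ht, rfl⟩
  have ht_pos : 0 < t := pos_of_mem_spectrum hA.inv ht
  have ht_inv : t⁻¹ ∈ spectrum ℝ A := by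
    obtain ⟨u, rfl⟩ := hA.isUnit
    rwa [← coe_units_inv, ← spectrum.inv₀_mem_iff] at ht
  exact sub_nonneg.2 <|
    (le_inv_comm₀ (pos_of_mem_spectrum hA hμ.1) ht_pos).1 (hμ.2 ht_inv)

theorem pos_or_neg_mul_of_isLeast_spectrum (hA : A.PosDef) (hμ : IsLeast (spectrum ℝ A) μ)
    {s : ι → ℝ} (hs : s * s = 1) (hinv : ∀ i j, 0 < s i * A⁻¹ i j * s j) {x : ι → ℝ} (hx : x ≠ 0)
    (hAx : A *ᵥ x = μ • x) : (∀ i, 0 < s i * x i) ∨ ∀ i, s i * x i < 0 :=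
  pos_or_neg_mul_of_mulVec_eq_smul hs hinv (posSemidef_inv_smul_one_sub_inv hA hμ) hx <|
    inv_mulVec_eq_inv_smul hA.isUnit (pos_of_mem_spectrum hA hμ.1).ne' hAx

end Spectrum

section CauchyW

variable {n : ℕ} {lam b : Fin n → ℝ}

theorem cauchyW_eq (lam b : Fin n → ℝ) :
    cauchyW n lam b = diagonal b * cauchyMatrix lam lam * diagonal b := by
  simp only [cauchyW, cauchyPsi, cauchyMatrix, one_div]

theorem posDef_cauchyW (hpos : ∀ i, 0 < lam i) (hinj : Function.Injective lam)
    (hb : ∀ i, b i ≠ 0) : (cauchyW n lam b).PosDef := by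
  have hdiag : Function.Injective (diagonal b).mulVec := mulVec_injective_of_isUnit <|
    isUnit_diagonal.2 <| Pi.isUnit_iff.2 fun i => (hb i).isUnit
  have h := (posDef_cauchyMatrix hpos hinj).conjTranspose_mul_mul_same hdiag
  rwa [diagonal_conjTranspose, star_trivial, ← cauchyW_eq] at h

theorem inv_cauchyW (hpos : ∀ i, 0 < lam i) (hinj : Function.Injective lam)
    (hb : ∀ i, b i ≠ 0) :
    (cauchyW n lam b)⁻¹ = cauchyW n lam (cauchyWeight lam lam / b) := by
  set c := cauchyWeight lam lam
  have hmul : diagonal b * diagonal (c / b) = diagonal c := by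
    rw [diagonal_mul_diagonal']
    exact congrArg diagonal (funext fun i => mul_div_cancel₀ (c i) (hb i))
  have hdiv : diagonal (c / b) = diagonal c * diagonal b⁻¹ := by
    rw [diagonal_mul_diagonal', div_eq_mul_inv]
    rfl
  have hone : diagonal b * diagonal b⁻¹ = 1 := by
    rw [diagonal_mul_diagonal', ← diagonal_one]
    exact congrArg diagonal (funext fun i => mul_inv_cancel₀ (hb i))
  have hcauchy : cauchyMatrix lam lam * (diagonal c * cauchyMatrix lam lam * diagonal c) = 1 :=
    cauchyMatrix_mul_eq_one hinj hinj fun i j => (add_pos (hpos i) (hpos j)).ne'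
  refine inv_eq_right_inv ?_
  calc cauchyW n lam b * cauchyW n lam (c / b)
      = diagonal b * (cauchyMatrix lam lam * (diagonal b * diagonal (c / b) *
          cauchyMatrix lam lam * diagonal (c / b))) := by simp only [cauchyW_eq, mul_assoc]
    _ = diagonal b * (cauchyMatrix lam lam * (diagonal c * cauchyMatrix lam lam * diagonal c)) *
          diagonal b⁻¹ := by
        rw [hmul, hdiv]
        simp only [mul_assoc]
    _ = 1 := by rw [hcauchy, mul_one, hone]

/-- The signature `(-1)ⁱ sgn bᵢ`, which the bottom eigenvector of `cauchyW n lam b` follows up to a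
global sign. -/
noncomputable def interlacingSign (b : Fin n → ℝ) (i : Fin n) : ℝ :=
  (-1) ^ (i : ℕ) * Real.sign (b i)

theorem neg_one_pow_mul_interlacingSign (b : Fin n → ℝ) (i : Fin n) :
    (-1) ^ (i : ℕ) * interlacingSign b i = Real.sign (b i) := by
  rw [interlacingSign, ← mul_assoc, ← mul_pow, neg_one_mul, neg_neg, one_pow, one_mul]

theorem interlacingSign_mul_self (hb : ∀ i, b i ≠ 0) :
    interlacingSign b * interlacingSign b = 1 := by
  ext i
  rw [Pi.mul_apply, interlacingSign, mul_mul_mul_comm, ← mul_pow, neg_one_mul, neg_neg, one_pow,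
    one_mul, Pi.one_apply, mul_self_eq_one_iff]
  exact (Real.sign_apply_eq_of_ne_zero (b i) (hb i)).symm

theorem sign_eq_of_mul_self_eq_one {s r : ℝ} (hs : s * s = 1) (h : 0 < s * r) :
    Real.sign r = s := by
  rcases mul_self_eq_one_iff.1 hs with rfl | rfl
  · exact Real.sign_of_pos (by simpa only [one_mul] using h)
  · exact Real.sign_of_neg (by simpa only [neg_one_mul, neg_pos] using h)

theorem neg_one_pow_mul_sign_eq (hb : ∀ i, b i ≠ 0) {r : ℝ} {i : Fin n}
    (h : 0 < interlacingSign b i * r) : (-1) ^ (i : ℕ) * Real.sign r = Real.sign (b i) := by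
  rw [sign_eq_of_mul_self_eq_one (congrFun (interlacingSign_mul_self hb) i) h,
    neg_one_pow_mul_interlacingSign]

theorem interlacingSign_mul_inv_cauchyW_mul_pos (hpos : ∀ i, 0 < lam i) (hmono : StrictMono lam)
    (hb : ∀ i, b i ≠ 0) (i j : Fin n) :
    0 < interlacingSign b i * (cauchyW n lam b)⁻¹ i j * interlacingSign b j := by
  have hadd (i j : Fin n) : 0 < lam i + lam j := add_pos (hpos i) (hpos j)
  have hsign (i : Fin n) : 0 < Real.sign (b i) * (b i)⁻¹ := by
    rw [← Real.sign_inv]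
    exact Real.sign_mul_pos_of_ne_zero _ (inv_ne_zero (hb i))
  calc 0 < ((-1) ^ (i : ℕ) * cauchyWeight lam lam i) * ((-1) ^ (j : ℕ) * cauchyWeight lam lam j) *
        ((Real.sign (b i) * (b i)⁻¹) * (Real.sign (b j) * (b j)⁻¹)) * (lam i + lam j)⁻¹ :=
        mul_pos (mul_pos (neg_one_pow_mul_cauchyWeight_mul_pos hadd hmono i j)
          (mul_pos (hsign i) (hsign j))) (inv_pos.2 (hadd i j))
    _ = interlacingSign b i * (cauchyW n lam b)⁻¹ i j * interlacingSign b j := by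
        rw [inv_cauchyW hpos hmono.injective hb, cauchyW_eq, mul_diagonal, diagonal_mul,
          cauchyMatrix, of_apply, Pi.div_apply, Pi.div_apply, interlacingSign, interlacingSign]
        ring

end CauchyW

/-- If every entry of `b` is nonzero, the smallest eigenvalue of `W(b)` is positive
and simple, and every corresponding eigenvector has all entries nonzero with signs
interlacing those of `b`. -/
theorem W_smallest_eigenvalue (n : ℕ) (hn : 0 < n) (lam : Fin n → ℝ)
    (hpos : ∀ i, 0 < lam i) (hmono : StrictMono lam)
    (b : Fin n → ℝ) (hb : ∀ i, b i ≠ 0) :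
    0 < sInf (spectrum ℝ (cauchyW n lam b)) ∧
    (∃ x : Fin n → ℝ, x ≠ 0 ∧
      (cauchyW n lam b).mulVec x = sInf (spectrum ℝ (cauchyW n lam b)) • x) ∧
    ∀ x : Fin n → ℝ, x ≠ 0 →
      (cauchyW n lam b).mulVec x = sInf (spectrum ℝ (cauchyW n lam b)) • x →
        (∀ i, x i ≠ 0) ∧
        ((∀ i : Fin n, (-1 : ℝ) ^ (i : ℕ) * Real.sign (x i) = Real.sign (b i)) ∨
          (∀ i : Fin n, (-1 : ℝ) ^ (i : ℕ) * Real.sign (x i) = -Real.sign (b i))) ∧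
        ∀ w : Fin n → ℝ,
          (cauchyW n lam b).mulVec w = sInf (spectrum ℝ (cauchyW n lam b)) • w →
            ∃ c : ℝ, w = c • x := by
  have : Nonempty (Fin n) := ⟨⟨0, hn⟩⟩
  have hW := posDef_cauchyW hpos hmono.injective hb
  have hμ := isLeast_sInf_spectrum hW.isHermitian
  have hsign (x : Fin n → ℝ) (hx : x ≠ 0)
      (hWx : cauchyW n lam b *ᵥ x = sInf (spectrum ℝ (cauchyW n lam b)) • x) :=
    pos_or_neg_mul_of_isLeast_spectrum hW hμ (interlacingSign_mul_self hb)
      (interlacingSign_mul_inv_cauchyW_mul_pos hpos hmono hb) hx hWx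
  have hne (x : Fin n → ℝ) (hx : x ≠ 0)
      (hWx : cauchyW n lam b *ᵥ x = sInf (spectrum ℝ (cauchyW n lam b)) • x) (i : Fin n) :
      x i ≠ 0 :=
    (hsign x hx hWx).elim (fun h => right_ne_zero_of_mul (h i).ne')
      fun h => right_ne_zero_of_mul (h i).ne
  refine ⟨pos_of_mem_spectrum hW hμ.1, exists_mulVec_eq_smul_of_mem_spectrum hμ.1,
    fun x hx hWx => ⟨hne x hx hWx, ?_, fun w hWw => exists_eq_smul_of_mulVec_eq_smul
      (fun v hv hWv => hne v hv hWv ⟨0, hn⟩) hx hWx hWw⟩⟩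
  refine (hsign x hx hWx).imp (fun h i => neg_one_pow_mul_sign_eq hb (h i)) fun h i => ?_
  rw [← neg_one_pow_mul_sign_eq (r := -x i) hb (by simpa only [mul_neg, neg_pos] using h i),
    Real.sign_neg, mul_neg, neg_neg]
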